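/- Let Γ be a group generated by a finite set S, let L be an (r,k)-rule, and let α and β be weakly equivalent free p.m.p. actions of Γ on standard Borel probability spaces (X, μ) and (Y, ν) respectively. If for every ε > 0 the action β has an (ε, L)-good coloring, then for every ε > 0 the action α has an (ε, L)-good coloring as well. -/

import Mathlib

open MeasureTheory

/-- A probability-measure-preserving action of a group `G` on a measure space. -/
structure PMP (G : Type*) [Group G] (X : Type*) [MeasurableSpace X] (μ : Measure X) where
  act : G → X → X
  measurable : ∀ γ, Measurable (act γ)
  preserves : ∀ γ, MeasurePreserving (act γ) μ μ
  act_one : ∀ x, act 1 x = x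
  act_mul : ∀ γ₁ γ₂ x, act (γ₁ * γ₂) x = act γ₁ (act γ₂ x)

/-- `f` weakly contains `g`. -/
def WeaklyContains {G : Type*} [Group G] {X Y : Type*} [MeasurableSpace X] [MeasurableSpace Y]
    {μ : Measure X} {ν : Measure Y} (f : PMP G X μ) (g : PMP G Y ν) : Prop :=
  ∀ n : ℕ, 1 ≤ n → ∀ C : Y → Fin n, Measurable C →
    ∀ F : Finset G, ∀ ε : ℝ, 0 < ε →
      ∃ D : X → Fin n, Measurable D ∧
        ∀ i j : Fin n, ∀ γ ∈ F,
          |(μ (f.act γ '' (D ⁻¹' {i}) ∩ D ⁻¹' {j})).toReal -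
            (ν (g.act γ '' (C ⁻¹' {i}) ∩ C ⁻¹' {j})).toReal| ≤ ε

/-- Weak equivalence of p.m.p. actions. -/
def WeaklyEquivalent {G : Type*} [Group G] {X Y : Type*} [MeasurableSpace X] [MeasurableSpace Y]
    {μ : Measure X} {ν : Measure Y} (f : PMP G X μ) (g : PMP G Y ν) : Prop :=
  WeaklyContains f g ∧ WeaklyContains g f

/-- The action `f` is (essentially) free. -/
def IsFreeAction {G : Type*} [Group G] {X : Type*} [MeasurableSpace X] {μ : Measure X}
    (f : PMP G X μ) : Prop :=
  ∀ᵐ x ∂μ, ∀ γ : G, f.act γ x = x → γ = 1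

/-- The ball of radius `r` around the identity in the Cayley graph `Cay(Γ, S)`. -/
def cayleyBall {Γ : Type*} [Group Γ] (S : Finset Γ) (r : ℕ) : Set Γ :=
  {γ | ∃ l : List Γ, l.length ≤ r ∧ (∀ x ∈ l, x ∈ S ∨ x⁻¹ ∈ S) ∧ l.prod = γ}

/-- The `k`-coloring of the `r`-ball around `x` induced by `φ` and the action `f`. -/
def ballColoring {Γ X : Type*} [Group Γ] [MeasurableSpace X] {μ : Measure X}
    (f : PMP Γ X μ) (S : Finset Γ) (r k : ℕ) (φ : X → Fin k) (x : X) :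
    cayleyBall S r → Fin k :=
  fun γ => φ (f.act ↑γ x)

/-- `φ` is an `(ε, L)`-good coloring for the action `f`. -/
def GoodColoring {Γ X : Type*} [Group Γ] [MeasurableSpace X] {μ : Measure X}
    (f : PMP Γ X μ) (S : Finset Γ) {r k : ℕ} (L : Set (cayleyBall S r → Fin k))
    (ε : ℝ) (φ : X → Fin k) : Prop :=
  Measurable φ ∧ 1 - ε ≤ (μ {x | ballColoring f S r k φ x ∈ L}).toReal

/-- The action `f` almost satisfies the rule `L`. -/
def AlmostSatisfies {Γ X : Type*} [Group Γ] [MeasurableSpace X] {μ : Measure X}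
    (f : PMP Γ X μ) (S : Finset Γ) {r k : ℕ} (L : Set (cayleyBall S r → Fin k)) : Prop :=
  ∀ ε : ℝ, 0 < ε → ∃ φ : X → Fin k, GoodColoring f S L ε φ

/-- The action `f` properly satisfies the rule `L`. -/
def ProperlySatisfies {Γ X : Type*} [Group Γ] [MeasurableSpace X] {μ : Measure X}
    (f : PMP Γ X μ) (S : Finset Γ) {r k : ℕ} (L : Set (cayleyBall S r → Fin k)) : Prop :=
  ∃ φ : X → Fin k, Measurable φ ∧ μ {x | ballColoring f S r k φ x ∈ L} = 1

theorem cayleyBall_finite_aux {Γ : Type} [Group Γ] (S : Finset Γ) (r : ℕ) :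
    (cayleyBall S r).Finite := by
  classical
  let A : Set Γ := {x | x ∈ S ∨ x⁻¹ ∈ S}
  have hA : A.Finite := by
    have h1 : A ⊆ (S : Set Γ) ∪ (S : Set Γ)⁻¹ := by
      intro x hx
      simpa [A] using hx
    exact (S.finite_toSet.union S.finite_toSet.inv).subset h1
  haveI : Finite A := hA
  refine ((List.finite_length_le A r).image (fun l => (l.map Subtype.val).prod)).subset ?_
  rintro γ ⟨l, hl, hm, rfl⟩
  lift l to List A using hm
  exact ⟨l, by simpa using hl, rfl⟩

theorem PMP.image_eq_preimage_aux {Γ X : Type} [Group Γ] [MeasurableSpace X] {μ : Measure X}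
    (f : PMP Γ X μ) (γ : Γ) (s : Set X) : f.act γ '' s = f.act γ⁻¹ ⁻¹' s := by
  ext x
  constructor
  · rintro ⟨y, hy, rfl⟩
    simpa [← f.act_mul, f.act_one] using hy
  · intro hx
    exact ⟨f.act γ⁻¹ x, hx, by simp [← f.act_mul, f.act_one]⟩

theorem weaklyContains_fintype_aux {Γ X Y T : Type} [Group Γ] [MeasurableSpace X]
    [MeasurableSpace Y] [Fintype T] [Nonempty T] [MeasurableSpace T] [MeasurableSingletonClass T]
    {μ : Measure X} {ν : Measure Y} {α : PMP Γ X μ} {β : PMP Γ Y ν} (h : WeaklyContains α β)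
    (C : Y → T) (hC : Measurable C) (F : Finset Γ) (δ : ℝ) (hδ : 0 < δ) :
    ∃ D : X → T, Measurable D ∧ ∀ i j : T, ∀ γ ∈ F,
      |μ.real (α.act γ '' (D ⁻¹' {i}) ∩ D ⁻¹' {j}) -
        ν.real (β.act γ '' (C ⁻¹' {i}) ∩ C ⁻¹' {j})| ≤ δ := by
  let e := Fintype.equivFin T
  obtain ⟨D, hD, hh⟩ := h (Fintype.card T) Fintype.card_pos (e ∘ C)
    ((measurable_of_countable e).comp hC) F δ hδ
  refine ⟨e.symm ∘ D, (measurable_of_countable e.symm).comp hD, fun i j γ hγ => ?_⟩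
  have h1 : ∀ i : T, (e.symm ∘ D) ⁻¹' {i} = D ⁻¹' {e i} := by
    intro i; ext x; simp [Equiv.symm_apply_eq]
  have h2 : ∀ i : T, (e ∘ C) ⁻¹' {e i} = C ⁻¹' {i} := by
    intro i; ext x; simp
  have := hh (e i) (e j) γ hγ
  rw [h2, h2] at this
  rw [h1, h1]
  exact this

theorem goodColorings_transfer_of_weaklyEquivalent
    {Γ X Y : Type} [Group Γ] [Countable Γ] (S : Finset Γ)
    (hS : Subgroup.closure (S : Set Γ) = ⊤)
    [MeasurableSpace X] [StandardBorelSpace X] [MeasurableSpace Y] [StandardBorelSpace Y]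
    (μ : Measure X) [IsProbabilityMeasure μ] (ν : Measure Y) [IsProbabilityMeasure ν]
    (r k : ℕ) (L : Set (cayleyBall S r → Fin k))
    (α : PMP Γ X μ) (β : PMP Γ Y ν)
    (hαfree : IsFreeAction α) (hβfree : IsFreeAction β)
    (hwe : WeaklyEquivalent α β)
    (hβ : ∀ ε : ℝ, 0 < ε → ∃ φ : Y → Fin k, GoodColoring β S L ε φ) :
    ∀ ε : ℝ, 0 < ε → ∃ φ : X → Fin k, GoodColoring α S L ε φ := by
  classical
  intro ε hε
  obtain ⟨φ, hφ, hφL⟩ := hβ (ε / 2) (by positivity)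
  haveI : Finite (cayleyBall S r) := cayleyBall_finite_aux S r
  haveI : Fintype (cayleyBall S r) := Fintype.ofFinite _
  obtain ⟨y0⟩ : Nonempty Y := nonempty_of_isProbabilityMeasure ν
  let T := cayleyBall S r → Fin k
  haveI : Nonempty T := ⟨fun _ => φ y0⟩
  let C : Y → T := ballColoring β S r k φ
  have hC : Measurable C := measurable_pi_lambda _ fun γ => hφ.comp (β.measurable _)
  let o : cayleyBall S r := ⟨1, [], by simp, by simp, by simp⟩
  let I := cayleyBall S r × T × T
  let M : ℝ := Fintype.card T + Fintype.card I
  have hM : 0 ≤ M := by positivity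
  let δ : ℝ := ε / (2 * (M + 1))
  have hδ : 0 < δ := by positivity
  have hMδ : M * δ ≤ ε / 2 := by
    have : (M + 1) * δ = ε / 2 := by
      simp only [δ]; field_simp
    nlinarith
  obtain ⟨D, hD, hh⟩ := weaklyContains_fintype_aux hwe.1 C hC
    (cayleyBall_finite_aux S r).toFinset δ hδ
  have hF : ∀ γ : cayleyBall S r, (γ : Γ) ∈ (cayleyBall_finite_aux S r).toFinset := by
    intro γ; simp
  let ψ : X → Fin k := fun x => D x o
  refine ⟨ψ, (measurable_pi_apply o).comp hD, ?_⟩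
  change 1 - ε / 2 ≤ ν.real (C ⁻¹' L) at hφL
  change 1 - ε ≤ μ.real {x | ballColoring α S r k ψ x ∈ L}
  have hi : ∀ i : T, ν.real (C ⁻¹' {i}) - δ ≤ μ.real (D ⁻¹' {i}) := by
    intro i
    have := hh i i 1 (hF o)
    have ha : α.act 1 = id := funext α.act_one
    have hb : β.act 1 = id := funext β.act_one
    simp only [ha, hb, Set.image_id, Set.inter_self] at this
    linarith [(abs_le.mp this).1]
  have hDL : ν.real (C ⁻¹' L) - Fintype.card T * δ ≤ μ.real (D ⁻¹' L) := by
    have e1 : ν.real (C ⁻¹' L) = ∑ i ∈ L.toFinset, ν.real (C ⁻¹' {i}) := by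
      rw [sum_measureReal_preimage_singleton _ fun i _ => hC (measurableSet_singleton i)]
      simp
    have e2 : μ.real (D ⁻¹' L) = ∑ i ∈ L.toFinset, μ.real (D ⁻¹' {i}) := by
      rw [sum_measureReal_preimage_singleton _ fun i _ => hD (measurableSet_singleton i)]
      simp
    have e3 := Finset.sum_le_sum (s := L.toFinset) fun i _ => hi i
    rw [Finset.sum_sub_distrib, Finset.sum_const, nsmul_eq_mul] at e3
    have e4 : (L.toFinset.card : ℝ) * δ ≤ Fintype.card T * δ := by
      gcongr
      exact Finset.card_le_univ _
    rw [e1, e2]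
    linarith
  let E : I → Set X := fun p => if p.2.1 p.1 = p.2.2 o then ∅ else
    α.act p.1 ⁻¹' (α.act p.1 '' (D ⁻¹' {p.2.1}) ∩ D ⁻¹' {p.2.2})
  have hE : ∀ p, μ.real (E p) ≤ δ := by
    rintro ⟨γ, i, j⟩
    by_cases hij : i γ = j o
    · simp [E, hij, hδ.le]
    · simp only [E, hij, if_false]
      have hms : MeasurableSet (α.act γ '' (D ⁻¹' {i}) ∩ D ⁻¹' {j}) := by
        rw [PMP.image_eq_preimage_aux]
        exact (α.measurable _ (hD (measurableSet_singleton i))).inter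
          (hD (measurableSet_singleton j))
      rw [(α.preserves γ).measureReal_preimage hms.nullMeasurableSet]
      have hem : β.act γ '' (C ⁻¹' {i}) ∩ C ⁻¹' {j} = ∅ := by
        ext y
        simp only [Set.mem_inter_iff, Set.mem_empty_iff_false, iff_false]
        rintro ⟨⟨z, hz, rfl⟩, hy⟩
        apply hij
        have hz' : C z = i := hz
        have hy' : C (β.act γ z) = j := hy
        rw [← hz', ← hy']
        change φ (β.act γ z) = φ (β.act 1 (β.act γ z))
        rw [β.act_one]
      have := hh i j γ (hF γ)
      rw [hem, measureReal_empty, sub_zero] at this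
      exact (abs_le.mp this).2
  have hsub : D ⁻¹' L ⊆ {x | ballColoring α S r k ψ x ∈ L} ∪ ⋃ p, E p := by
    intro x hx
    by_cases hb : ballColoring α S r k ψ x = D x
    · left
      change ballColoring α S r k ψ x ∈ L
      rw [hb]; exact hx
    · right
      obtain ⟨γ, hγ⟩ := Function.ne_iff.mp hb
      refine Set.mem_iUnion.mpr ⟨(γ, D x, D (α.act γ x)), ?_⟩
      have hne : ¬ (D x γ = D (α.act γ x) o) := fun h => hγ h.symm
      simp only [E, hne, if_false]
      exact ⟨⟨x, rfl, rfl⟩, rfl⟩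
  have h1 : μ.real (D ⁻¹' L) ≤ μ.real {x | ballColoring α S r k ψ x ∈ L} + μ.real (⋃ p, E p) :=
    (measureReal_mono hsub).trans (measureReal_union_le _ _)
  have h2 : μ.real (⋃ p, E p) ≤ Fintype.card I * δ := by
    refine (measureReal_iUnion_fintype_le E).trans ?_
    refine (Finset.sum_le_sum fun p _ => hE p).trans ?_
    simp
  have h3 : M * δ = Fintype.card T * δ + Fintype.card I * δ := by simp only [M]; ring
  linarith
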